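/- Let E be a collection of bricks over Λ. Then the set {Filt(Gen(M)) : M ∈ E} is a face of the canonical join complex Γ(tors Λ) if and only if every pair of modules M, M' in E is hom-orthogonal, i.e. Hom_Λ(M, M') = 0 and Hom_Λ(M', M) = 0. -/

import Mathlib

/-!
Common definitions: the category `mod Λ` of finite(-dimensional) left `Λ`-modules,
torsion(-free) classes, filtration closures, bricks, minimal (co-)extending modules,
and the lattice-theoretic notions for `tors Λ` (ordered by containment).
-/

/-- A bundled (left) `Λ`-module with carrier in `Type`. -/
structure Mdl (Λ : Type) [Ring Λ] : Type 1 where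
  carrier : Type
  [isAddCommGroup : AddCommGroup carrier]
  [isModule : Module Λ carrier]

attribute [instance] Mdl.isAddCommGroup Mdl.isModule

instance {Λ : Type} [Ring Λ] : CoeSort (Mdl Λ) Type :=
  ⟨Mdl.carrier⟩

variable (Λ : Type) [Ring Λ]

/-- Bundle a module. -/
def Mdl.of (X : Type) [AddCommGroup X] [Module Λ X] : Mdl Λ :=
  { carrier := X }

/-- `M` and `N` are isomorphic `Λ`-modules. -/
def MIso (M N : Mdl Λ) : Prop :=
  Nonempty (M.carrier ≃ₗ[Λ] N.carrier)

/-- `N` is a factor (quotient) module of `M`. -/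
def IsFactor (M N : Mdl Λ) : Prop :=
  ∃ f : M.carrier →ₗ[Λ] N.carrier, Function.Surjective f

/-- `N` is a proper factor of `M` (a quotient by a nonzero submodule). -/
def IsProperFactor (M N : Mdl Λ) : Prop :=
  ∃ f : M.carrier →ₗ[Λ] N.carrier, Function.Surjective f ∧ ¬ Function.Injective f

/-- `N` is (isomorphic to) a submodule of `M`. -/
def IsSubmoduleOf (N M : Mdl Λ) : Prop :=
  ∃ f : N.carrier →ₗ[Λ] M.carrier, Function.Injective f

/-- `N` is (isomorphic to) a proper submodule of `M`. -/
def IsProperSubmoduleOf (N M : Mdl Λ) : Prop :=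
  ∃ f : N.carrier →ₗ[Λ] M.carrier, Function.Injective f ∧ ¬ Function.Surjective f

/-- `D` is (isomorphic to) a direct summand of `N`. -/
def IsSummand (D N : Mdl Λ) : Prop :=
  ∃ (i : D.carrier →ₗ[Λ] N.carrier) (p : N.carrier →ₗ[Λ] D.carrier),
    p.comp i = LinearMap.id

/-- `0 → A --f--> M --g--> B → 0` is a short exact sequence. -/
def IsSES {A M B : Mdl Λ} (f : A.carrier →ₗ[Λ] M.carrier)
    (g : M.carrier →ₗ[Λ] B.carrier) : Prop :=
  Function.Injective f ∧ Function.Surjective g ∧ LinearMap.range f = LinearMap.ker g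

/-- The short exact sequence `0 → A --f--> M --g--> B → 0` splits. -/
def SplitsSES {A M B : Mdl Λ} (_f : A.carrier →ₗ[Λ] M.carrier)
    (g : M.carrier →ₗ[Λ] B.carrier) : Prop :=
  ∃ s : B.carrier →ₗ[Λ] M.carrier, g.comp s = LinearMap.id

/-- `M` is an extension of `B` by `A`, i.e. there is a s.e.s. `0 → A → M → B → 0`. -/
def ExtOf (M A B : Mdl Λ) : Prop :=
  ∃ (f : A.carrier →ₗ[Λ] M.carrier) (g : M.carrier →ₗ[Λ] B.carrier), IsSES Λ f g

/-- A torsion class in `mod Λ`: a class of finite(-dimensional) modules containing `0`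
and closed under isomorphisms, factor modules and extensions. -/
structure IsTorsionClass (T : Set (Mdl Λ)) : Prop where
  fin : ∀ M ∈ T, Module.Finite Λ M.carrier
  zero_mem : ∀ M : Mdl Λ, Subsingleton M.carrier → M ∈ T
  iso_closed : ∀ M ∈ T, ∀ N : Mdl Λ, MIso Λ M N → N ∈ T
  factor_closed : ∀ M ∈ T, ∀ N : Mdl Λ, IsFactor Λ M N → N ∈ T
  ext_closed : ∀ A ∈ T, ∀ B ∈ T, ∀ M : Mdl Λ, ExtOf Λ M A B → M ∈ T

/-- A torsion-free class in `mod Λ`: a class of finite(-dimensional) modules containing `0`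
and closed under isomorphisms, submodules and extensions. -/
structure IsTorsionFreeClass (F : Set (Mdl Λ)) : Prop where
  fin : ∀ M ∈ F, Module.Finite Λ M.carrier
  zero_mem : ∀ M : Mdl Λ, Subsingleton M.carrier → M ∈ F
  iso_closed : ∀ M ∈ F, ∀ N : Mdl Λ, MIso Λ M N → N ∈ F
  sub_closed : ∀ M ∈ F, ∀ N : Mdl Λ, IsSubmoduleOf Λ N M → N ∈ F
  ext_closed : ∀ A ∈ F, ∀ B ∈ F, ∀ M : Mdl Λ, ExtOf Λ M A B → M ∈ F

/-- `Filt S M`: `M` admits a filtration `0 = M₀ ⊆ M₁ ⊆ ⋯ ⊆ M_l = M` whose successive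
quotients are isomorphic to modules in `S`. -/
inductive Filt (S : Set (Mdl Λ)) : Mdl Λ → Prop
  | of_subsingleton (M : Mdl Λ) (h : Subsingleton M.carrier) : Filt S M
  | step (M : Mdl Λ) (N : Submodule Λ M.carrier) (X : Mdl Λ) (hX : X ∈ S)
      (hN : Filt S (Mdl.of Λ N)) (e : Nonempty ((M.carrier ⧸ N) ≃ₗ[Λ] X.carrier)) :
      Filt S M

/-- The filtration closure `Filt(S)` as a set of modules. -/
def FiltSet (S : Set (Mdl Λ)) : Set (Mdl Λ) := {M | Filt Λ S M}

/-- `Gen(M)`: the class of factor modules of finite direct sums of copies of `M`. -/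
def GenSet (M : Mdl Λ) : Set (Mdl Λ) :=
  {N | ∃ (n : ℕ) (f : (Fin n → M.carrier) →ₗ[Λ] N.carrier), Function.Surjective f}

/-- `T^⊥ = {X ∈ mod Λ : Hom_Λ(N, X) = 0 for all N ∈ T}`. -/
def Perp (T : Set (Mdl Λ)) : Set (Mdl Λ) :=
  {X | Module.Finite Λ X.carrier ∧ ∀ N ∈ T, ∀ f : N.carrier →ₗ[Λ] X.carrier, f = 0}

/-- A brick: a module (in `mod Λ`) whose endomorphism ring is a division ring,
i.e. it is nonzero and every nonzero endomorphism is invertible. -/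
def IsBrick (M : Mdl Λ) : Prop :=
  Module.Finite Λ M.carrier ∧ Nontrivial M.carrier ∧
    ∀ f : M.carrier →ₗ[Λ] M.carrier, f ≠ 0 → Function.Bijective f

/-- An indecomposable module: nonzero, and not the direct sum of two nonzero submodules. -/
def Indec (M : Mdl Λ) : Prop :=
  Nontrivial M.carrier ∧
    ∀ p q : Submodule Λ M.carrier, IsCompl p q → p = ⊥ ∨ q = ⊥

/-- `M` is a minimal extending module for the torsion class `T`:
(P1) every proper factor of `M` is in `T`;
(P2) if `0 → M → X → N → 0` is non-split exact with `N ∈ T`, then `X ∈ T`;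
(P3) `Hom_Λ(T, M) = 0`. -/
structure IsMinExt (T : Set (Mdl Λ)) (M : Mdl Λ) : Prop where
  fin : Module.Finite Λ M.carrier
  p1 : ∀ N : Mdl Λ, IsProperFactor Λ M N → N ∈ T
  p2 : ∀ (X N : Mdl Λ) (f : M.carrier →ₗ[Λ] X.carrier) (g : X.carrier →ₗ[Λ] N.carrier),
      IsSES Λ f g → ¬ SplitsSES Λ f g → N ∈ T → X ∈ T
  p3 : ∀ N ∈ T, ∀ f : N.carrier →ₗ[Λ] M.carrier, f = 0

/-- `M` is a minimal co-extending module for the torsion-free class `F`: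
(P1') every proper submodule of `M` is in `F`;
(P2') if `0 → F' → X → M → 0` is non-split exact with `F' ∈ F`, then `X ∈ F`;
(P3') `Hom_Λ(M, F) = 0`. -/
structure IsMinCoExt (F : Set (Mdl Λ)) (M : Mdl Λ) : Prop where
  fin : Module.Finite Λ M.carrier
  p1 : ∀ N : Mdl Λ, IsProperSubmoduleOf Λ N M → N ∈ F
  p2 : ∀ (X F' : Mdl Λ) (f : F'.carrier →ₗ[Λ] X.carrier) (g : X.carrier →ₗ[Λ] M.carrier),
      IsSES Λ f g → ¬ SplitsSES Λ f g → F' ∈ F → X ∈ F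
  p3 : ∀ F' ∈ F, ∀ f : M.carrier →ₗ[Λ] F'.carrier, f = 0

/-- `T'` covers `T` in the lattice `tors Λ` of torsion classes ordered by containment. -/
def TorsCovers (T' T : Set (Mdl Λ)) : Prop :=
  IsTorsionClass Λ T' ∧ IsTorsionClass Λ T ∧ T ⊂ T' ∧
    ∀ Y : Set (Mdl Λ), IsTorsionClass Λ Y → T ⊂ Y → Y ⊆ T' → Y = T'

/-- `F'` covers `F` in the lattice `torf Λ` of torsion-free classes ordered by containment. -/
def TorfCovers (F' F : Set (Mdl Λ)) : Prop :=
  IsTorsionFreeClass Λ F' ∧ IsTorsionFreeClass Λ F ∧ F ⊂ F' ∧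
    ∀ Y : Set (Mdl Λ), IsTorsionFreeClass Λ Y → F ⊂ Y → Y ⊆ F' → Y = F'

/-- The join `⋁ A` of a family of torsion classes in `tors Λ`: the smallest torsion
class containing all members of `A`. -/
def TorsJoin (A : Set (Set (Mdl Λ))) : Set (Mdl Λ) :=
  ⋂₀ {T : Set (Mdl Λ) | IsTorsionClass Λ T ∧ ∀ S ∈ A, S ⊆ T}

/-- A completely join-irreducible element of `tors Λ`: a torsion class `T` such that
`T ∈ A` whenever `A` is a set of torsion classes with `⋁ A = T`. -/
def CompletelyJoinIrred (T : Set (Mdl Λ)) : Prop :=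
  IsTorsionClass Λ T ∧
    ∀ A : Set (Set (Mdl Λ)), (∀ S ∈ A, IsTorsionClass Λ S) → TorsJoin Λ A = T → T ∈ A

/-- The join representation `⋁ A` is irredundant in `tors Λ`:
every proper subset has strictly smaller join. -/
def TorsIrredundant (A : Set (Set (Mdl Λ))) : Prop :=
  ∀ B : Set (Set (Mdl Λ)), B ⊂ A → TorsJoin Λ B ⊂ TorsJoin Λ A

/-- `A` is the canonical join representation of its join in `tors Λ` (equivalently, a face
of the canonical join complex `Γ(tors Λ)`): `⋁ A` is irredundant, and `A ≪ B` for every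
irredundant join representation `⋁ B` of the same element. -/
def TorsCJR (A : Set (Set (Mdl Λ))) : Prop :=
  (∀ S ∈ A, IsTorsionClass Λ S) ∧ TorsIrredundant Λ A ∧
    ∀ B : Set (Set (Mdl Λ)), (∀ S ∈ B, IsTorsionClass Λ S) →
      TorsJoin Λ B = TorsJoin Λ A → TorsIrredundant Λ B → ∀ a ∈ A, ∃ b ∈ B, a ⊆ b

/-- `M` and `N` are hom-orthogonal: `Hom_Λ(M, N) = 0` and `Hom_Λ(N, M) = 0`. -/
def HomOrthogonal (M N : Mdl Λ) : Prop :=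
  (∀ f : M.carrier →ₗ[Λ] N.carrier, f = 0) ∧ ∀ f : N.carrier →ₗ[Λ] M.carrier, f = 0

/-!
For a finite module `M`, `Filt (Gen M)` is the smallest torsion class containing `M`, so joins of
such classes can be bounded above by testing their generators in suitable torsion classes. Two are
attached to a module `M`: the modules without nonzero maps to `M`, and those all of whose nonzero
maps to `M` are surjective. A brick `M` lies in the second but not in the first.

If `E` is hom-orthogonal, the first class of `M ∈ E` contains the other members of `E` but not `M`,
which gives irredundance. The second contains all of `E`, hence `⋁ B` for every join representation
`B` of the same element. As `⋁ B` is not inside the first class, some `b ∈ B` contains a module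
with a nonzero map to `M`; this map is onto, so `M ∈ b`.

Conversely, let `f : M → M'` be nonzero with `M`, `M'` non-isomorphic bricks of `E`. As `M'` is an
extension of its quotient `Q` by `range f`, a quotient of `M`, replacing `Filt (Gen M')` by
`Filt (Gen Q)` does not change the join. Canonicity forces `M' ∈ Filt (Gen Q)`, hence a nonzero map
`Q → M'`; composed with `M' → Q` it is a nonzero, hence injective, endomorphism of `M'` that kills
`range f ≠ 0`, a contradiction.
-/

section

variable {Λ}

/-! ### Extensions and filtrations -/

theorem extOf_submodule_quotient (M : Mdl Λ) (N : Submodule Λ M.carrier) :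
    ExtOf Λ M (Mdl.of Λ N) (Mdl.of Λ (M.carrier ⧸ N)) :=
  ⟨N.subtype, N.mkQ, N.injective_subtype, N.mkQ_surjective,
    N.range_subtype.trans N.ker_mkQ.symm⟩

theorem ExtOf.finite {M A B : Mdl Λ} (h : ExtOf Λ M A B) (hA : Module.Finite Λ A.carrier)
    (hB : Module.Finite Λ B.carrier) : Module.Finite Λ M.carrier := by
  obtain ⟨f, g, -, hg, hfg⟩ := h
  exact Module.Finite.of_exact (LinearMap.exact_iff.mpr hfg.symm) hg

theorem MIso.symm {M N : Mdl Λ} (h : MIso Λ M N) : MIso Λ N M :=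
  h.map LinearEquiv.symm

theorem MIso.isFactor {M N : Mdl Λ} (h : MIso Λ M N) : IsFactor Λ M N :=
  let ⟨e⟩ := h
  ⟨e, e.surjective⟩

theorem GenSet.of_isFactor {M X Y : Mdl Λ} (hX : X ∈ GenSet Λ M) (h : IsFactor Λ X Y) :
    Y ∈ GenSet Λ M :=
  let ⟨n, f, hf⟩ := hX
  let ⟨g, hg⟩ := h
  ⟨n, g ∘ₗ f, hg.comp hf⟩

namespace Filt

variable {S : Set (Mdl Λ)}

theorem of_mem {X : Mdl Λ} (hX : X ∈ S) : Filt Λ S X :=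
  step X ⊥ X hX (of_subsingleton _ (inferInstanceAs (Subsingleton (⊥ : Submodule Λ X.carrier))))
    ⟨Submodule.quotEquivOfEqBot ⊥ rfl⟩

theorem of_mIso {X Y : Mdl Λ} (hX : Filt Λ S X) (h : MIso Λ X Y) : Filt Λ S Y := by
  induction hX generalizing Y with
  | of_subsingleton X hX =>
    obtain ⟨e⟩ := h
    exact of_subsingleton Y e.symm.subsingleton
  | step X N Z hZ _ hXN ih =>
    obtain ⟨e⟩ := h
    obtain ⟨q⟩ := hXN
    exact step Y (N.map (e : X.carrier →ₗ[Λ] Y.carrier)) Z hZ (ih ⟨e.submoduleMap N⟩)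
      ⟨(Submodule.Quotient.equiv N _ e rfl).symm.trans q⟩

theorem of_isFactor (hS : ∀ X ∈ S, ∀ Y, IsFactor Λ X Y → Y ∈ S) {X Y : Mdl Λ}
    (hX : Filt Λ S X) (h : IsFactor Λ X Y) : Filt Λ S Y := by
  induction hX generalizing Y with
  | of_subsingleton X hX =>
    obtain ⟨f, hf⟩ := h
    exact of_subsingleton Y hf.subsingleton
  | step X N Z hZ _ hXN ih =>
    obtain ⟨f, hf⟩ := h
    obtain ⟨e⟩ := hXN
    have hquot : Function.Surjective (N.mapQ (N.map f) f (N.le_comap_map f)) := by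
      rw [← LinearMap.range_eq_top, Submodule.range_mapQ, LinearMap.range_eq_top.mpr hf,
        Submodule.map_top, Submodule.range_mkQ]
    exact step Y (N.map f) (Mdl.of Λ (Y.carrier ⧸ N.map f))
      (hS Z hZ _ ⟨N.mapQ (N.map f) f (N.le_comap_map f) ∘ₗ e.symm.toLinearMap,
        hquot.comp e.symm.surjective⟩)
      (ih ⟨f.submoduleMap N, f.submoduleMap_surjective N⟩) ⟨LinearEquiv.refl _ _⟩

end Filt

theorem IsSES.extOf_comap {X A B : Mdl Λ} {f : A.carrier →ₗ[Λ] X.carrier}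
    {g : X.carrier →ₗ[Λ] B.carrier} (h : IsSES Λ f g) (N : Submodule Λ B.carrier) :
    ExtOf Λ (Mdl.of Λ (N.comap g)) A (Mdl.of Λ N) := by
  obtain ⟨hf, hg, hfg⟩ := h
  have hexact : Function.Exact f g := LinearMap.exact_iff.mpr hfg.symm
  refine ⟨f.codRestrict (N.comap g) fun a => ?_, g.restrict fun x hx => hx, ?_, ?_, ?_⟩
  · rw [Submodule.mem_comap, hexact.apply_apply_eq_zero]
    exact N.zero_mem
  · exact fun a b hab => hf (congrArg Subtype.val hab)
  · rintro ⟨y, hy⟩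
    obtain ⟨x, rfl⟩ := hg y
    exact ⟨⟨x, hy⟩, rfl⟩
  · refine (LinearMap.exact_iff.mp fun x => ?_).symm
    refine Subtype.ext_iff.trans ((hexact x.1).trans ?_)
    exact exists_congr fun a => (Subtype.ext_iff (a1 := f.codRestrict (N.comap g) _ a)).symm

theorem nonempty_quotient_comap_equiv {X B : Type} [AddCommGroup X] [Module Λ X]
    [AddCommGroup B] [Module Λ B] {g : X →ₗ[Λ] B} (hg : Function.Surjective g)
    (N : Submodule Λ B) : Nonempty ((X ⧸ N.comap g) ≃ₗ[Λ] B ⧸ N) := by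
  have hker : LinearMap.ker (N.mkQ ∘ₗ g) = N.comap g := by
    rw [LinearMap.ker_comp, N.ker_mkQ]
  exact ⟨(Submodule.quotEquivOfEq _ _ hker.symm).trans
    ((N.mkQ ∘ₗ g).quotKerEquivOfSurjective (N.mkQ_surjective.comp hg))⟩

theorem Filt.of_extOf {S : Set (Mdl Λ)} {X A B : Mdl Λ} (hA : Filt Λ S A) (hB : Filt Λ S B)
    (h : ExtOf Λ X A B) : Filt Λ S X := by
  induction hB generalizing X with
  | of_subsingleton B hB =>
    obtain ⟨f, g, hf, -, hfg⟩ := h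
    have hsurj : Function.Surjective f := by
      rw [← LinearMap.range_eq_top, hfg, LinearMap.ker_eq_top]
      exact Subsingleton.elim _ _
    exact hA.of_mIso ⟨LinearEquiv.ofBijective f ⟨hf, hsurj⟩⟩
  | step B N Z hZ _ hBN ih =>
    obtain ⟨f, g, hses⟩ := h
    obtain ⟨e⟩ := hBN
    obtain ⟨q⟩ := nonempty_quotient_comap_equiv hses.2.1 N
    exact .step X (N.comap g) Z hZ (ih (hses.extOf_comap N)) ⟨q.trans e⟩

/-! ### Torsion classes generated by a module -/

namespace IsTorsionClass

variable {T : Set (Mdl Λ)}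

theorem prod_mem (hT : IsTorsionClass Λ T) {M N : Mdl Λ} (hM : M ∈ T) (hN : N ∈ T) :
    Mdl.of Λ (M.carrier × N.carrier) ∈ T :=
  hT.ext_closed M hM N hN _ ⟨.inl Λ M.carrier N.carrier, .snd Λ M.carrier N.carrier,
    LinearMap.inl_injective, LinearMap.snd_surjective, LinearMap.range_inl Λ _ _⟩

theorem pi_mem (hT : IsTorsionClass Λ T) {M : Mdl Λ} (hM : M ∈ T) (n : ℕ) :
    Mdl.of Λ (Fin n → M.carrier) ∈ T := by
  induction n with
  | zero => exact hT.zero_mem _ (inferInstanceAs (Subsingleton (Fin 0 → M.carrier)))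
  | succ n ih =>
    exact hT.iso_closed _ (hT.prod_mem hM ih) _
      ⟨Fin.consLinearEquiv Λ fun _ : Fin (n + 1) => M.carrier⟩

theorem genSet_subset (hT : IsTorsionClass Λ T) {M : Mdl Λ} (hM : M ∈ T) : GenSet Λ M ⊆ T :=
  fun N ⟨n, hN⟩ => hT.factor_closed _ (hT.pi_mem hM n) N hN

theorem filtSet_subset (hT : IsTorsionClass Λ T) {S : Set (Mdl Λ)} (hS : S ⊆ T) :
    FiltSet Λ S ⊆ T := by
  intro X (hX : Filt Λ S X)
  induction hX with
  | of_subsingleton X hX => exact hT.zero_mem X hX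
  | step X N Z hZ _ hXN ih =>
    obtain ⟨e⟩ := hXN
    exact hT.ext_closed _ ih _ (hT.iso_closed Z (hS hZ) _ ⟨e.symm⟩) X
      (extOf_submodule_quotient X N)

end IsTorsionClass

theorem isTorsionClass_finite : IsTorsionClass Λ {X : Mdl Λ | Module.Finite Λ X.carrier} where
  fin _ hX := hX
  zero_mem X _ := inferInstanceAs (Module.Finite Λ X.carrier)
  iso_closed _ (_ : Module.Finite Λ _) _ := fun ⟨e⟩ => Module.Finite.equiv e
  factor_closed _ (_ : Module.Finite Λ _) _ := fun ⟨f, hf⟩ => Module.Finite.of_surjective f hf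
  ext_closed _ hA _ hB _ h := h.finite hA hB

theorem isTorsionClass_filtSet {S : Set (Mdl Λ)} (hfin : ∀ X ∈ S, Module.Finite Λ X.carrier)
    (hS : ∀ X ∈ S, ∀ Y, IsFactor Λ X Y → Y ∈ S) : IsTorsionClass Λ (FiltSet Λ S) where
  fin _ hX := isTorsionClass_finite.filtSet_subset hfin hX
  zero_mem := Filt.of_subsingleton
  iso_closed _ hX _ h := hX.of_mIso h
  factor_closed _ hX _ h := hX.of_isFactor hS h
  ext_closed _ hA _ hB _ h := hA.of_extOf hB h

/-- The class `Filt(Gen(M))`; for finite `M` it is the smallest torsion class containing `M`. -/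
def filtGen (M : Mdl Λ) : Set (Mdl Λ) :=
  FiltSet Λ (GenSet Λ M)

theorem isTorsionClass_filtGen {M : Mdl Λ} (hM : Module.Finite Λ M.carrier) :
    IsTorsionClass Λ (filtGen M) :=
  isTorsionClass_filtSet (isTorsionClass_finite.genSet_subset hM)
    fun _ hX _ => GenSet.of_isFactor hX

theorem mem_filtGen_self (M : Mdl Λ) : M ∈ filtGen M :=
  Filt.of_mem ⟨1, LinearMap.proj 0, fun x => ⟨fun _ => x, rfl⟩⟩

theorem IsTorsionClass.filtGen_subset {T : Set (Mdl Λ)} (hT : IsTorsionClass Λ T) {M : Mdl Λ}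
    (hM : M ∈ T) : filtGen M ⊆ T :=
  hT.filtSet_subset (hT.genSet_subset hM)

theorem mem_filtGen_of_isFactor {M N : Mdl Λ} (h : IsFactor Λ M N) : N ∈ filtGen M :=
  Filt.of_isFactor (fun _ hX _ => GenSet.of_isFactor hX) (mem_filtGen_self M) h

theorem MIso.filtGen_eq {M N : Mdl Λ} (h : MIso Λ M N) (hM : Module.Finite Λ M.carrier)
    (hN : Module.Finite Λ N.carrier) : filtGen M = filtGen N :=
  ((isTorsionClass_filtGen hN).filtGen_subset (mem_filtGen_of_isFactor h.symm.isFactor)).antisymm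
    ((isTorsionClass_filtGen hM).filtGen_subset (mem_filtGen_of_isFactor h.isFactor))

/-! ### Torsion classes defined by the images of maps to a module -/

/-- The modules all of whose nonzero maps to `M` have image in the set `U` of submodules of `M`.
This is a torsion class when `U` is an upper set; see `leftPerp` and `zeroOrSurjective`. -/
def imageClass (M : Mdl Λ) (U : Set (Submodule Λ M.carrier)) : Set (Mdl Λ) :=
  {X | Module.Finite Λ X.carrier ∧
    ∀ u : X.carrier →ₗ[Λ] M.carrier, u = 0 ∨ LinearMap.range u ∈ U}

theorem mem_imageClass_of_isFactor {M X Y : Mdl Λ} {U : Set (Submodule Λ M.carrier)}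
    (hX : X ∈ imageClass M U) (h : IsFactor Λ X Y) : Y ∈ imageClass M U := by
  obtain ⟨hfin, hU⟩ := hX
  obtain ⟨f, hf⟩ := h
  refine ⟨Module.Finite.of_surjective f hf, fun u => ?_⟩
  rw [← LinearMap.range_comp_of_range_eq_top u (LinearMap.range_eq_top.mpr hf)]
  refine (hU (u ∘ₗ f)).imp_left fun huf => ?_
  rwa [← LinearMap.cancel_right hf, LinearMap.zero_comp]

theorem mem_imageClass_of_extOf {M X A B : Mdl Λ} {U : Set (Submodule Λ M.carrier)}
    (hU : IsUpperSet U) (hA : A ∈ imageClass M U) (hB : B ∈ imageClass M U)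
    (h : ExtOf Λ X A B) : X ∈ imageClass M U := by
  refine ⟨h.finite hA.1 hB.1, fun u => ?_⟩
  obtain ⟨f, g, -, hg, hfg⟩ := h
  rcases hA.2 (u ∘ₗ f) with huf | huf
  · have hker : LinearMap.ker g ≤ LinearMap.ker u := by
      rwa [← hfg, LinearMap.range_le_ker_iff]
    have hquot : Mdl.of Λ (X.carrier ⧸ LinearMap.ker g) ∈ imageClass M U :=
      mem_imageClass_of_isFactor hB
        ⟨(g.quotKerEquivOfSurjective hg).symm.toLinearMap, LinearEquiv.surjective _⟩
    have hlift : (LinearMap.ker g).liftQ u hker = 0 ∨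
        LinearMap.range ((LinearMap.ker g).liftQ u hker) ∈ U := hquot.2 _
    rwa [← LinearMap.range_eq_bot, Submodule.range_liftQ, LinearMap.range_eq_bot] at hlift
  · exact .inr (hU (LinearMap.range_comp_le_range f u) huf)

theorem isTorsionClass_imageClass (M : Mdl Λ) {U : Set (Submodule Λ M.carrier)}
    (hU : IsUpperSet U) : IsTorsionClass Λ (imageClass M U) where
  fin _ hX := hX.1
  zero_mem X hX := ⟨isTorsionClass_finite.zero_mem X hX, fun _ => .inl (Subsingleton.elim _ _)⟩
  iso_closed _ hX _ h := mem_imageClass_of_isFactor hX h.isFactor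
  factor_closed _ hX _ h := mem_imageClass_of_isFactor hX h
  ext_closed _ hA _ hB _ h := mem_imageClass_of_extOf hU hA hB h

/-- The torsion class `⊥M` of the finite modules `X` with `Hom(X, M) = 0`. -/
def leftPerp (M : Mdl Λ) : Set (Mdl Λ) :=
  {X | Module.Finite Λ X.carrier ∧ ∀ u : X.carrier →ₗ[Λ] M.carrier, u = 0}

/-- The torsion class of the finite modules all of whose nonzero maps to `M` are surjective. -/
def zeroOrSurjective (M : Mdl Λ) : Set (Mdl Λ) :=
  {X | Module.Finite Λ X.carrier ∧
    ∀ u : X.carrier →ₗ[Λ] M.carrier, u = 0 ∨ Function.Surjective u}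

theorem isTorsionClass_leftPerp (M : Mdl Λ) : IsTorsionClass Λ (leftPerp M) := by
  simpa only [leftPerp, imageClass, Set.mem_empty_iff_false, or_false] using
    isTorsionClass_imageClass M isUpperSet_empty

theorem isTorsionClass_zeroOrSurjective (M : Mdl Λ) :
    IsTorsionClass Λ (zeroOrSurjective M) := by
  simpa only [zeroOrSurjective, imageClass, Set.mem_Ici, top_le_iff, LinearMap.range_eq_top] using
    isTorsionClass_imageClass M (isUpperSet_Ici ⊤)

/-! ### Joins of torsion classes -/

variable {A B : Set (Set (Mdl Λ))} {S T : Set (Mdl Λ)}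

theorem isTorsionClass_torsJoin (hA : ∀ S ∈ A, IsTorsionClass Λ S) :
    IsTorsionClass Λ (TorsJoin Λ A) where
  fin _ hX := hX _ ⟨isTorsionClass_finite, fun S hS => (hA S hS).fin⟩
  zero_mem X h _ hT := hT.1.zero_mem X h
  iso_closed X hX Y e T hT := hT.1.iso_closed X (hX T hT) Y e
  factor_closed X hX Y h T hT := hT.1.factor_closed X (hX T hT) Y h
  ext_closed X hX Y hY Z h T hT := hT.1.ext_closed X (hX T hT) Y (hY T hT) Z h

theorem torsJoin_subset (hT : IsTorsionClass Λ T) (h : ∀ S ∈ A, S ⊆ T) : TorsJoin Λ A ⊆ T :=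
  fun _ hX => hX T ⟨hT, h⟩

theorem subset_torsJoin (hS : S ∈ A) : S ⊆ TorsJoin Λ A :=
  fun _ hX _ hT => hT.2 S hS hX

theorem torsJoin_subset_torsJoin (h : ∀ S ∈ A, S ⊆ TorsJoin Λ B) :
    TorsJoin Λ A ⊆ TorsJoin Λ B :=
  fun _ hX T hT => hX T ⟨hT.1, fun S hS _ hY => h S hS hY T hT⟩

theorem torsJoin_mono (h : A ⊆ B) : TorsJoin Λ A ⊆ TorsJoin Λ B :=
  torsJoin_subset_torsJoin fun _ hS => subset_torsJoin (h hS)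

theorem torsIrredundant_iff :
    TorsIrredundant Λ A ↔ ∀ S ∈ A, ¬ S ⊆ TorsJoin Λ (A \ {S}) := by
  refine ⟨fun hA S hS hle => ?_, fun hA B hB => ⟨torsJoin_mono hB.1, fun hle => ?_⟩⟩
  · refine (hA (A \ {S}) (Set.sdiff_singleton_ssubset.mpr hS)).2
      (torsJoin_subset_torsJoin fun R hR => ?_)
    rcases eq_or_ne R S with rfl | hne
    · exact hle
    · exact subset_torsJoin ⟨hR, hne⟩
  · obtain ⟨S, hS, hBS⟩ := Set.ssubset_iff_sdiff_singleton.mp hB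
    exact hA S hS ((subset_torsJoin hS).trans (hle.trans (torsJoin_mono hBS)))

theorem torsIrredundant_pair (hS : IsTorsionClass Λ S) (hT : IsTorsionClass Λ T)
    (hST : ¬ S ⊆ T) (hTS : ¬ T ⊆ S) : TorsIrredundant Λ {S, T} := by
  rw [torsIrredundant_iff]
  rintro R (rfl | rfl) hle
  · refine hST (hle.trans (torsJoin_subset hT ?_))
    rintro _ ⟨rfl | rfl, hne⟩
    · exact absurd rfl hne
    · rfl
  · refine hTS (hle.trans (torsJoin_subset hS ?_))
    rintro _ ⟨rfl | rfl, hne⟩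
    · rfl
    · exact absurd rfl hne

theorem TorsCJR.subset_of_subset_torsJoin (hA : TorsCJR Λ A) (hS : S ∈ A)
    (hT : IsTorsionClass Λ T) (hTA : T ⊆ TorsJoin Λ A)
    (hST : S ⊆ TorsJoin Λ {TorsJoin Λ (A \ {S}), T}) : S ⊆ T := by
  obtain ⟨htors, hirr, hcan⟩ := hA
  -- Otherwise `{W, T}` is an irredundant join representation of `⋁ A` without a member above `S`.
  set W := TorsJoin Λ (A \ {S})
  have hWtors : IsTorsionClass Λ W := isTorsionClass_torsJoin fun R hR => htors R hR.1
  have hSW : ¬ S ⊆ W := torsIrredundant_iff.mp hirr S hS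
  by_contra hle
  have hWT : ¬ W ⊆ T := fun h => hle (hST.trans (torsJoin_subset hT (by simp [h])))
  have hTW : ¬ T ⊆ W := fun h => hSW (hST.trans (torsJoin_subset hWtors (by simp [h])))
  have hjoin : TorsJoin Λ {W, T} = TorsJoin Λ A := by
    refine Set.Subset.antisymm (torsJoin_subset_torsJoin ?_) (torsJoin_subset_torsJoin ?_)
    · rintro R (rfl | rfl)
      · exact torsJoin_mono Set.sdiff_subset
      · exact hTA
    · intro R hR
      rcases eq_or_ne R S with rfl | hne
      · exact hST
      · have hRW : R ⊆ W := subset_torsJoin ⟨hR, hne⟩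
        exact hRW.trans (subset_torsJoin (Set.mem_insert W {T}))
  have htors' : ∀ R ∈ ({W, T} : Set (Set (Mdl Λ))), IsTorsionClass Λ R := by
    rintro R (rfl | rfl) <;> assumption
  obtain ⟨R, rfl | rfl, hSR⟩ :=
    hcan {W, T} htors' hjoin (torsIrredundant_pair hWtors hT hWT hTW) S hS
  · exact hSW hSR
  · exact hle hSR

/-! ### Bricks -/

namespace IsBrick

variable {M M' : Mdl Λ}

theorem notMem_leftPerp (hM : IsBrick Λ M) : M ∉ leftPerp M := by
  have : Nontrivial M.carrier := hM.2.1
  exact fun h => one_ne_zero (α := Module.End Λ M.carrier) (h.2 1)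

theorem mem_zeroOrSurjective (hM : IsBrick Λ M) : M ∈ zeroOrSurjective M :=
  ⟨hM.1, fun u => or_iff_not_imp_left.mpr fun hu => (hM.2.2 u hu).2⟩

theorem exists_ne_zero_of_mem_filtGen {X : Mdl Λ} (hM : IsBrick Λ M)
    (hX : Module.Finite Λ X.carrier) (h : M ∈ filtGen X) :
    ∃ u : X.carrier →ₗ[Λ] M.carrier, u ≠ 0 := by
  by_contra! hzero
  exact hM.notMem_leftPerp ((isTorsionClass_leftPerp M).filtGen_subset ⟨hX, hzero⟩ h)

theorem exists_surjective_of_filtGen_eq (hM : Module.Finite Λ M.carrier) (hM' : IsBrick Λ M')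
    (h : filtGen M = filtGen M') :
    ∃ u : M.carrier →ₗ[Λ] M'.carrier, Function.Surjective u := by
  obtain ⟨u, hu⟩ := hM'.exists_ne_zero_of_mem_filtGen hM (h ▸ mem_filtGen_self M')
  have hmem : M ∈ zeroOrSurjective M' :=
    (isTorsionClass_zeroOrSurjective M').filtGen_subset hM'.mem_zeroOrSurjective
      (h ▸ mem_filtGen_self M)
  exact ⟨u, (hmem.2 u).resolve_left hu⟩

theorem mIso_of_filtGen_eq (hM : IsBrick Λ M) (hM' : IsBrick Λ M')
    (h : filtGen M = filtGen M') : MIso Λ M M' := by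
  obtain ⟨f, hf⟩ := exists_surjective_of_filtGen_eq hM.1 hM' h
  obtain ⟨g, hg⟩ := exists_surjective_of_filtGen_eq hM'.1 hM h.symm
  have hgf : Function.Surjective (g ∘ₗ f) := hg.comp hf
  have hne : g ∘ₗ f ≠ 0 := by
    have : Nontrivial M.carrier := hM.2.1
    intro h0
    obtain ⟨x, hx⟩ := exists_ne (0 : M.carrier)
    obtain ⟨y, rfl⟩ := hgf x
    exact hx (LinearMap.congr_fun h0 y)
  have hinj : Function.Injective (g ∘ f) := (hM.2.2 _ hne).1
  exact ⟨LinearEquiv.ofBijective f ⟨hinj.of_comp, hf⟩⟩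

theorem notMem_filtGen_quotient_range {X : Mdl Λ} (hM : IsBrick Λ M)
    {f : X.carrier →ₗ[Λ] M.carrier} (hf : f ≠ 0) :
    M ∉ filtGen (Mdl.of Λ (M.carrier ⧸ LinearMap.range f)) := by
  intro hmem
  have : Module.Finite Λ M.carrier := hM.1
  obtain ⟨g, hg⟩ : ∃ g : M.carrier ⧸ LinearMap.range f →ₗ[Λ] M.carrier, g ≠ 0 :=
    hM.exists_ne_zero_of_mem_filtGen
      (inferInstanceAs (Module.Finite Λ (M.carrier ⧸ LinearMap.range f))) hmem
  have hne : g ∘ₗ (LinearMap.range f).mkQ ≠ 0 := fun h0 =>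
    hg (Submodule.linearMap_qext _ (h0.trans (LinearMap.zero_comp _).symm))
  refine hf ((LinearMap.cancel_left (hM.2.2 _ hne).1).mp ?_)
  rw [LinearMap.comp_assoc, LinearMap.range_mkQ_comp, LinearMap.comp_zero, LinearMap.comp_zero]

theorem exists_mem_of_mem_torsJoin (hM : IsBrick Λ M) (hB : ∀ S ∈ B, IsTorsionClass Λ S)
    (hle : TorsJoin Λ B ⊆ zeroOrSurjective M) (hmem : M ∈ TorsJoin Λ B) : ∃ S ∈ B, M ∈ S := by
  obtain ⟨S, hS, hSM⟩ : ∃ S ∈ B, ¬ S ⊆ leftPerp M := by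
    by_contra! h
    exact hM.notMem_leftPerp (torsJoin_subset (isTorsionClass_leftPerp M) h hmem)
  obtain ⟨X, hXS, hX⟩ := Set.not_subset.mp hSM
  obtain ⟨hfin, hsurj⟩ := hle (subset_torsJoin hS hXS)
  obtain ⟨u, hu⟩ : ∃ u : X.carrier →ₗ[Λ] M.carrier, u ≠ 0 := by
    by_contra! h
    exact hX ⟨hfin, h⟩
  exact ⟨S, hS, (hB S hS).factor_closed X hXS M ⟨u, (hsurj u).resolve_left hu⟩⟩

end IsBrick

/-! ### Canonical join representations and hom-orthogonality -/

variable {E : Set (Mdl Λ)}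

theorem TorsCJR.hom_eq_zero (hC : TorsCJR Λ (filtGen '' E)) {M M' : Mdl Λ} (hME : M ∈ E)
    (hME' : M' ∈ E) (hM : IsBrick Λ M) (hM' : IsBrick Λ M') (hiso : ¬ MIso Λ M M')
    (f : M.carrier →ₗ[Λ] M'.carrier) : f = 0 := by
  by_contra hf
  have hM'tors := isTorsionClass_filtGen hM'.1
  have hM'C : filtGen M' ∈ filtGen '' E := Set.mem_image_of_mem _ hME'
  set W := TorsJoin Λ (filtGen '' E \ {filtGen M'})
  set Q := Mdl.of Λ (M'.carrier ⧸ LinearMap.range f)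
  have hQM : Q ∈ filtGen M' :=
    mem_filtGen_of_isFactor ⟨Submodule.mkQ _, Submodule.mkQ_surjective _⟩
  have hQtors : IsTorsionClass Λ (filtGen Q) := isTorsionClass_filtGen (hM'tors.fin Q hQM)
  have hne : filtGen M ≠ filtGen M' := fun h => hiso (hM.mIso_of_filtGen_eq hM' h)
  have hMW : filtGen M ⊆ W := subset_torsJoin ⟨Set.mem_image_of_mem _ hME, hne⟩
  have hrange : Mdl.of Λ (LinearMap.range f) ∈ W :=
    hMW (mem_filtGen_of_isFactor ⟨f.rangeRestrict, f.surjective_rangeRestrict⟩)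
  have hjoin : IsTorsionClass Λ (TorsJoin Λ {W, filtGen Q}) := by
    refine isTorsionClass_torsJoin ?_
    rintro S (rfl | rfl)
    · exact isTorsionClass_torsJoin fun S hS => hC.1 S hS.1
    · exact hQtors
  have hM'join : M' ∈ TorsJoin Λ {W, filtGen Q} :=
    hjoin.ext_closed _ (subset_torsJoin (Set.mem_insert _ _) hrange) _
      (subset_torsJoin (Set.mem_insert_of_mem W (Set.mem_singleton _)) (mem_filtGen_self Q)) _
      (extOf_submodule_quotient M' (LinearMap.range f))
  exact hM'.notMem_filtGen_quotient_range hf <|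
    hC.subset_of_subset_torsJoin hM'C hQtors
      ((hM'tors.filtGen_subset hQM).trans (subset_torsJoin hM'C))
      (hjoin.filtGen_subset hM'join) (mem_filtGen_self M')

theorem torsIrredundant_filtGen_of_homOrthogonal (hE : ∀ M ∈ E, IsBrick Λ M)
    (horth : ∀ M ∈ E, ∀ M' ∈ E, ¬ MIso Λ M M' → HomOrthogonal Λ M M') :
    TorsIrredundant Λ (filtGen '' E) := by
  rw [torsIrredundant_iff]
  rintro _ ⟨M, hM, rfl⟩ hle
  refine (hE M hM).notMem_leftPerp
    (torsJoin_subset (isTorsionClass_leftPerp M) ?_ (hle (mem_filtGen_self M)))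
  rintro _ ⟨⟨N, hN, rfl⟩, hne⟩
  have hNM : ¬ MIso Λ N M := fun h => hne (h.filtGen_eq (hE N hN).1 (hE M hM).1)
  exact (isTorsionClass_leftPerp M).filtGen_subset ⟨(hE N hN).1, (horth N hN M hM hNM).1⟩

theorem torsJoin_filtGen_subset_zeroOrSurjective (hE : ∀ N ∈ E, Module.Finite Λ N.carrier)
    {M : Mdl Λ} (hM : IsBrick Λ M)
    (hzero : ∀ N ∈ E, ¬ MIso Λ N M → ∀ u : N.carrier →ₗ[Λ] M.carrier, u = 0) :
    TorsJoin Λ (filtGen '' E) ⊆ zeroOrSurjective M := by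
  have htors := isTorsionClass_zeroOrSurjective M
  refine torsJoin_subset htors ?_
  rintro _ ⟨N, hN, rfl⟩
  refine htors.filtGen_subset ?_
  by_cases hNM : MIso Λ N M
  · exact htors.iso_closed M hM.mem_zeroOrSurjective N hNM.symm
  · exact ⟨hE N hN, fun u => .inl (hzero N hN hNM u)⟩

theorem torsCJR_filtGen_of_homOrthogonal (hE : ∀ M ∈ E, IsBrick Λ M)
    (horth : ∀ M ∈ E, ∀ M' ∈ E, ¬ MIso Λ M M' → HomOrthogonal Λ M M') :
    TorsCJR Λ (filtGen '' E) := by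
  refine ⟨?_, torsIrredundant_filtGen_of_homOrthogonal hE horth, ?_⟩
  · rintro _ ⟨M, hM, rfl⟩
    exact isTorsionClass_filtGen (hE M hM).1
  · rintro B hB hjoin - _ ⟨M, hM, rfl⟩
    have hle : TorsJoin Λ (filtGen '' E) ⊆ zeroOrSurjective M :=
      torsJoin_filtGen_subset_zeroOrSurjective (fun N hN => (hE N hN).1) (hE M hM)
        fun N hN hNM => (horth N hN M hM hNM).1
    have hmem : M ∈ TorsJoin Λ (filtGen '' E) :=
      subset_torsJoin (Set.mem_image_of_mem _ hM) (mem_filtGen_self M)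
    obtain ⟨S, hS, hMS⟩ := (hE M hM).exists_mem_of_mem_torsJoin hB (hjoin ▸ hle) (hjoin ▸ hmem)
    exact ⟨S, hS, (hB S hS).filtGen_subset hMS⟩

theorem statement3_general (hE : ∀ M ∈ E, IsBrick Λ M) :
    TorsCJR Λ (filtGen '' E) ↔ ∀ M ∈ E, ∀ M' ∈ E, ¬ MIso Λ M M' → HomOrthogonal Λ M M' :=
  ⟨fun hC M hM M' hM' hiso =>
    ⟨hC.hom_eq_zero hM hM' (hE M hM) (hE M' hM') hiso,
      hC.hom_eq_zero hM' hM (hE M' hM') (hE M hM) fun h => hiso h.symm⟩,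
    torsCJR_filtGen_of_homOrthogonal hE⟩

end

/-- Let `E` be a collection of (pairwise non-isomorphic) bricks over `Λ`.
Then `{Filt(Gen(M)) : M ∈ E}` is a face of the canonical join complex `Γ(tors Λ)`
(i.e. it is a canonical join representation) if and only if every pair of distinct
modules of `E` is hom-orthogonal. -/
theorem statement3 (k : Type) [Field k] (Λ : Type) [Ring Λ] [Algebra k Λ]
    [FiniteDimensional k Λ] (E : Set (Mdl Λ)) (hE : ∀ M ∈ E, IsBrick Λ M)
    (hnoniso : ∀ M ∈ E, ∀ M' ∈ E, M ≠ M' → ¬ MIso Λ M M') :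
    TorsCJR Λ ((fun M : Mdl Λ => FiltSet Λ (GenSet Λ M)) '' E) ↔
      ∀ M ∈ E, ∀ M' ∈ E, M ≠ M' → HomOrthogonal Λ M M' :=
  (statement3_general hE).trans <| forall₄_congr fun M hM M' hM' => imp_congr_left
    ⟨fun h e => h (e ▸ ⟨LinearEquiv.refl _ _⟩), hnoniso M hM M' hM'⟩
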